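/- Let u be an information structure on K × (C×C₁) × (D×D₁), and define v = marg_{K×C×(D×D₁)}u, u' = marg_{K×(C×C₁)×D}u, v' = marg_{K×C×D}u. If under u player 1's joint signal (c, c₁) and player 2's signal d are conditionally independent given the state k, then d(u', v') ≤ d(u, v): player 1's extra signal c₁ is more valuable when player 2 also receives the extra signal d₁ (informational complements). -/

import Mathlib

open scoped BigOperators ENNReal

namespace ValueDistance

/-- An information structure: a probability distribution on `K × ℕ × ℕ`
(state, signal of player 1, signal of player 2). -/
abbrev InfoStruct (K : Type) := PMF (K × ℕ × ℕ)

/-- A behavior strategy / garbling : a map `ℕ → Δ(ℕ)`. -/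
abbrev Garbling : Type := ℕ → PMF ℕ

variable {K : Type}

/-- `g` is a payoff function with action bound `L` : values in `[-1,1]`,
`g k i j = -1` when `i ≥ L`, and `g k i j = 1` when `i < L` and `j ≥ L`. -/
def IsPayoffL (L : ℕ) (g : K → ℕ → ℕ → ℝ) : Prop :=
  (∀ k i j, g k i j ∈ Set.Icc (-1 : ℝ) 1) ∧
  (∀ k i j, L ≤ i → g k i j = -1) ∧
  (∀ k i j, i < L → L ≤ j → g k i j = 1)

/-- `g` belongs to the set `𝒢` of payoff functions. -/
def IsPayoff (g : K → ℕ → ℕ → ℝ) : Prop := ∃ L, IsPayoffL L g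

/-- `g` belongs to the set `𝒢₁` of single-agent (player 1) problems. -/
def IsPayoff1 (g : K → ℕ → ℕ → ℝ) : Prop :=
  IsPayoff g ∧ ∀ k i j j', g k i j = g k i j'

/-- Expected payoff in the Bayesian game `Γ(u,g)` when player 1 uses the behavior
strategy `σ` and player 2 uses `τ`. -/
noncomputable def payoff (u : InfoStruct K) (g : K → ℕ → ℕ → ℝ)
    (σ τ : Garbling) : ℝ :=
  ∑' (x : K × ℕ × ℕ) (i : ℕ) (j : ℕ),
    (u x).toReal * (σ x.2.1 i).toReal * (τ x.2.2 j).toReal * g x.1 i j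

/-- The value `val(u,g)` of the zero-sum Bayesian game `Γ(u,g)`
(the common value of `sup inf` and `inf sup` of the expected payoff;
we take `sup inf` as the definition). -/
noncomputable def val (u : InfoStruct K) (g : K → ℕ → ℕ → ℝ) : ℝ :=
  ⨆ σ : Garbling, ⨅ τ : Garbling, payoff u g σ τ

/-- Total variation distance `‖u − v‖`. -/
noncomputable def tv {α : Type} (u v : PMF α) : ℝ :=
  ∑' x : α, |(u x).toReal - (v x).toReal|

/-- `q.u` : player 1's signal garbled through `q`. -/
noncomputable def garbleLeft (q : Garbling) (u : InfoStruct K) : InfoStruct K :=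
  u.bind (fun x => (q x.2.1).map (fun c => (x.1, c, x.2.2)))

/-- `u.q` : player 2's signal garbled through `q`. -/
noncomputable def garbleRight (u : InfoStruct K) (q : Garbling) : InfoStruct K :=
  u.bind (fun x => (q x.2.2).map (fun d => (x.1, x.2.1, d)))

/-- The value-based distance `d(u,v) = sup_{g ∈ 𝒢} |val(u,g) − val(v,g)|`. -/
noncomputable def dVal (u v : InfoStruct K) : ℝ :=
  ⨆ g : {g : K → ℕ → ℕ → ℝ // IsPayoff g}, |val u g.1 - val v g.1|

/-- The single-agent distance `d₁(u,v) = sup_{g ∈ 𝒢₁} |val(u,g) − val(v,g)|`. -/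
noncomputable def d1 (u v : InfoStruct K) : ℝ :=
  ⨆ g : {g : K → ℕ → ℕ → ℝ // IsPayoff1 g}, |val u g.1 - val v g.1|

/-- Marginal of an information structure on `K × ℕ` (state, player 1's signal). -/
noncomputable def marg1 (u : InfoStruct K) : PMF (K × ℕ) :=
  u.map (fun x => (x.1, x.2.1))

/-- Garbling of a single-agent information structure:
`(q.w)(k,c) = Σ_s w(k,s)·q(s)({c})`. -/
noncomputable def garble1 (q : Garbling) (w : PMF (K × ℕ)) : PMF (K × ℕ) :=
  w.bind (fun x => (q x.2).map (fun c => (x.1, c)))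

/-- Marginal of an information structure on the states. -/
noncomputable def margK (u : InfoStruct K) : PMF K := u.map Prod.fst

/-- Marginal of an information structure on `K × ℕ` (state, player 2's signal). -/
noncomputable def margKD (u : InfoStruct K) : PMF (K × ℕ) :=
  u.map (fun x => (x.1, x.2.2))

/-- `σ.q` : on signal `c`, draw `c'` according to `q(c)` and play `σ(c')`. -/
noncomputable def compGarble (σ q : Garbling) : Garbling :=
  fun c => (q c).bind σ

/-- `u ∈ 𝒰(L)` : both players' signals are `< L` with probability 1. -/
def InU (L : ℕ) (u : InfoStruct K) : Prop :=
  ∀ x : K × ℕ × ℕ, u x ≠ 0 → x.2.1 < L ∧ x.2.2 < L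

/-- `q ∈ 𝒬(L)` : garbling with values supported on `{0,…,L−1}`. -/
def GarblingIn (L : ℕ) (q : Garbling) : Prop :=
  ∀ n m, q n m ≠ 0 → m < L

/-- The two players' signals are conditionally independent given the state:
`u(k)·u(k,c,d) = u(k,c)·u(k,d)` for all `k, c, d`
(equivalently `u(c,d|k) = u(c|k)·u(d|k)` whenever `u(k) > 0`). -/
def CondIndep (u : InfoStruct K) : Prop :=
  ∀ (k : K) (c d : ℕ),
    (∑' y : ℕ × ℕ, u (k, y)) * u (k, c, d)
      = (∑' d' : ℕ, u (k, c, d')) * (∑' c' : ℕ, u (k, c', d))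

end ValueDistance

namespace ValueDistance

/-- Expectation of a real function under a PMF. -/
noncomputable def EE {α : Type} (p : PMF α) (f : α → ℝ) : ℝ := ∑' a, (p a).toReal * f a

section aux
variable {α β : Type}

lemma pmf_summable (p : PMF α) : Summable (fun a => (p a).toReal) :=
  ENNReal.summable_toReal p.tsum_coe_ne_top

lemma pmf_tsum (p : PMF α) : ∑' a, (p a).toReal = 1 := by
  rw [← ENNReal.tsum_toReal_eq (fun a => p.apply_ne_top a), p.tsum_coe]; simp

lemma EE_summable (p : PMF α) {f : α → ℝ} (hf : ∀ a, |f a| ≤ 1) :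
    Summable (fun a => (p a).toReal * f a) := by
  refine Summable.of_norm_bounded (pmf_summable p) (fun a => ?_)
  rw [norm_mul, Real.norm_of_nonneg ENNReal.toReal_nonneg]
  exact mul_le_of_le_one_right ENNReal.toReal_nonneg (hf a)

lemma EE_mono (p : PMF α) {f g : α → ℝ} (hf : ∀ a, |f a| ≤ 1) (hg : ∀ a, |g a| ≤ 1)
    (h : ∀ a, f a ≤ g a) : EE p f ≤ EE p g :=
  Summable.tsum_le_tsum (fun a => mul_le_mul_of_nonneg_left (h a) ENNReal.toReal_nonneg)
    (EE_summable p hf) (EE_summable p hg)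

lemma EE_const (p : PMF α) (c : ℝ) : EE p (fun _ => c) = c := by
  unfold EE; rw [tsum_mul_right, pmf_tsum, one_mul]

lemma abs_EE_le (p : PMF α) {f : α → ℝ} (hf : ∀ a, |f a| ≤ 1) : |EE p f| ≤ 1 := by
  rw [abs_le]
  constructor
  · rw [← EE_const p (-1)]
    exact EE_mono p (by simp) hf (fun a => (abs_le.1 (hf a)).1)
  · rw [← EE_const p 1]
    exact EE_mono p hf (by simp) (fun a => (abs_le.1 (hf a)).2)

lemma EE_pure (a : α) (f : α → ℝ) : EE (PMF.pure a) f = f a := by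
  unfold EE
  rw [tsum_eq_single a]
  · simp
  · intro b hb; simp [PMF.pure_apply, hb]

lemma EE_bind (p : PMF α) (q : α → PMF β) {f : β → ℝ} (hf : ∀ a, |f a| ≤ 1) :
    EE (p.bind q) f = EE p (fun a => EE (q a) f) := by
  unfold EE
  have h1 : ∀ b, ((p.bind q) b).toReal * f b
      = ∑' a, (p a).toReal * ((q a b).toReal * f b) := by
    intro b
    rw [PMF.bind_apply, ENNReal.tsum_toReal_eq, ← tsum_mul_right]
    · simp [ENNReal.toReal_mul, mul_assoc]
    · intro a; exact ENNReal.mul_ne_top (p.apply_ne_top a) ((q a).apply_ne_top b)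
  simp_rw [h1]
  have hs : Summable (fun x : α × β => (p x.1).toReal * ((q x.1 x.2).toReal)) := by
    have hnn : 0 ≤ (fun x : α × β => (p x.1).toReal * ((q x.1 x.2).toReal)) := by
      intro x
      have h0 : 0 ≤ (p x.1).toReal * ((q x.1 x.2).toReal) := by positivity
      exact h0
    refine (summable_prod_of_nonneg hnn).2 ⟨?_, ?_⟩
    · intro a
      have h := (pmf_summable (q a)).mul_left (p a).toReal
      simpa only using h
    · have h : ∀ a, ∑' b, (p a).toReal * (q a b).toReal = (p a).toReal := by
        intro a
        rw [tsum_mul_left, pmf_tsum, mul_one]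
      simp only [h]
      exact pmf_summable p
  have hs2 : Summable (fun x : α × β => (p x.1).toReal * ((q x.1 x.2).toReal * f x.2)) := by
    refine Summable.of_norm_bounded hs (fun x => ?_)
    have h0 : 0 ≤ (p x.1).toReal * ((q x.1 x.2).toReal) := by positivity
    rw [← mul_assoc, norm_mul, Real.norm_of_nonneg h0]
    exact mul_le_of_le_one_right h0 (hf _)
  rw [Summable.tsum_comm (f := fun a b => (p a).toReal * ((q a b).toReal * f b)) hs2]
  simp_rw [tsum_mul_left]

lemma EE_map (p : PMF α) (φ : α → β) {f : β → ℝ} (hf : ∀ a, |f a| ≤ 1) :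
    EE (p.map φ) f = EE p (fun a => f (φ a)) := by
  rw [← PMF.bind_pure_comp, EE_bind _ _ hf]
  simp [EE_pure]

lemma EE_swap (p : PMF α) (q : PMF β) {f : α → β → ℝ} (hf : ∀ a b, |f a b| ≤ 1) :
    EE p (fun a => EE q (f a)) = EE q (fun b => EE p (fun a => f a b)) := by
  have hf' : ∀ x : α × β, |(fun x : α × β => f x.1 x.2) x| ≤ 1 := fun x => hf _ _
  have := congrArg (fun r => EE r (fun x : α × β => f x.1 x.2))
    (PMF.bind_comm p q (fun a b => PMF.pure (a, b)))
  simpa [EE_bind _ _ hf', EE_pure] using this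

end aux

variable {K : Type}

lemma payoff_eq (u : InfoStruct K) (g : K → ℕ → ℕ → ℝ) (σ τ : Garbling) :
    payoff u g σ τ = EE u (fun x => EE (σ x.2.1) (fun i => EE (τ x.2.2) (fun j => g x.1 i j))) := by
  unfold payoff EE
  simp_rw [← tsum_mul_left, mul_assoc]

lemma payoff_abs (u : InfoStruct K) {g : K → ℕ → ℕ → ℝ} (hg : ∀ k i j, |g k i j| ≤ 1)
    (σ τ : Garbling) : |payoff u g σ τ| ≤ 1 := by
  rw [payoff_eq]
  exact abs_EE_le _ fun x => abs_EE_le _ fun i => abs_EE_le _ fun j => hg _ _ _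

lemma payoff_map {Ω : Type} (w : PMF Ω) (φ : Ω → K × ℕ × ℕ) {g : K → ℕ → ℕ → ℝ}
    (hg : ∀ k i j, |g k i j| ≤ 1) (σ τ : Garbling) :
    payoff (w.map φ) g σ τ = EE w (fun x => EE (σ (φ x).2.1)
      (fun i => EE (τ (φ x).2.2) (fun j => g (φ x).1 i j))) := by
  rw [payoff_eq, EE_map]
  exact fun x => abs_EE_le _ fun i => abs_EE_le _ fun j => hg _ _ _

instance : Nonempty Garbling := ⟨fun _ => PMF.pure 0⟩

lemma bddBelow_payoff (u : InfoStruct K) {g : K → ℕ → ℕ → ℝ} (hg : ∀ k i j, |g k i j| ≤ 1)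
    (σ : Garbling) : BddBelow (Set.range fun τ => payoff u g σ τ) :=
  ⟨-1, by rintro _ ⟨τ, rfl⟩; exact (abs_le.1 (payoff_abs u hg σ τ)).1⟩

lemma abs_inf (u : InfoStruct K) {g : K → ℕ → ℕ → ℝ} (hg : ∀ k i j, |g k i j| ≤ 1)
    (σ : Garbling) : |⨅ τ, payoff u g σ τ| ≤ 1 := by
  rw [abs_le]
  constructor
  · exact le_ciInf fun τ => (abs_le.1 (payoff_abs u hg σ τ)).1
  · exact (ciInf_le (bddBelow_payoff u hg σ) (fun _ => PMF.pure 0)).trans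
      (abs_le.1 (payoff_abs u hg σ _)).2

lemma bddAbove_inf (u : InfoStruct K) {g : K → ℕ → ℕ → ℝ} (hg : ∀ k i j, |g k i j| ≤ 1) :
    BddAbove (Set.range fun σ => ⨅ τ, payoff u g σ τ) :=
  ⟨1, by rintro _ ⟨σ, rfl⟩; exact (abs_le.1 (abs_inf u hg σ)).2⟩

lemma abs_val (u : InfoStruct K) {g : K → ℕ → ℕ → ℝ} (hg : ∀ k i j, |g k i j| ≤ 1) :
    |val u g| ≤ 1 := by
  rw [abs_le]
  constructor
  · exact (abs_le.1 (abs_inf u hg (fun _ => PMF.pure 0))).1.trans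
      (le_ciSup (bddAbove_inf u hg) (fun _ => PMF.pure 0))
  · exact ciSup_le fun σ => (abs_le.1 (abs_inf u hg σ)).2

lemma IsPayoff.abs_le_one {g : K → ℕ → ℕ → ℝ} (hg : IsPayoff g) : ∀ k i j, |g k i j| ≤ 1 := by
  obtain ⟨L, h, -⟩ := hg
  exact fun k i j => abs_le.2 (h k i j)

lemma bddAbove_dVal (u v : InfoStruct K) : BddAbove (Set.range
    fun g : {g : K → ℕ → ℕ → ℝ // IsPayoff g} => |val u g.1 - val v g.1|) := by
  refine ⟨2, ?_⟩
  rintro _ ⟨g, rfl⟩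
  have h1 := abs_le.1 (abs_val u g.2.abs_le_one)
  have h2 := abs_le.1 (abs_val v g.2.abs_le_one)
  exact abs_le.2 ⟨by linarith [h1.1, h2.2], by linarith [h1.2, h2.1]⟩

/-! ### Minimax -/

/-- clamp -/
def cl (L : ℕ) (i : ℕ) : Fin (L + 1) := ⟨min i L, by omega⟩

lemma payoff_clamp {L : ℕ} {g : K → ℕ → ℕ → ℝ} (hg : IsPayoffL L g) (k : K) (i j : ℕ) :
    g k i j = g k (cl L i) (cl L j) := by
  obtain ⟨-, h1, h2⟩ := hg
  simp only [cl]
  by_cases hi : L ≤ i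
  · rw [h1 k i j hi, h1 k (min i L) _ (by omega)]
  · by_cases hj : L ≤ j
    · rw [h2 k i j (by omega) hj, h2 k (min i L) _ (by omega) (by omega)]
    · rw [min_eq_left (by omega), min_eq_left (by omega)]

/-- real behaviour strategies -/
def SS (L : ℕ) : Set (ℕ → Fin (L + 1) → ℝ) := Set.pi Set.univ (fun _ => stdSimplex ℝ (Fin (L + 1)))

/-- pointwise payoff -/
noncomputable def hh (L : ℕ) (g : K → ℕ → ℕ → ℝ) (s t : ℕ → Fin (L + 1) → ℝ)
    (x : K × ℕ × ℕ) : ℝ :=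
  ∑ i, s x.2.1 i * ∑ j, t x.2.2 j * g x.1 (i : ℕ) (j : ℕ)

lemma abs_simplex {ι : Type} [Fintype ι] {p : ι → ℝ} (hp : p ∈ stdSimplex ℝ ι) {f : ι → ℝ}
    (hf : ∀ i, |f i| ≤ 1) : |∑ i, p i * f i| ≤ 1 := by
  calc |∑ i, p i * f i| ≤ ∑ i, |p i * f i| := Finset.abs_sum_le_sum_abs _ _
    _ ≤ ∑ i, p i := Finset.sum_le_sum fun i _ => by
        rw [abs_mul, abs_of_nonneg (hp.1 i)]
        exact mul_le_of_le_one_right (hp.1 i) (hf i)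
    _ = 1 := hp.2

lemma abs_hh {L : ℕ} {g : K → ℕ → ℕ → ℝ} (hg : ∀ k i j, |g k i j| ≤ 1)
    {s t : ℕ → Fin (L + 1) → ℝ} (hs : s ∈ SS L) (ht : t ∈ SS L) (x : K × ℕ × ℕ) :
    |hh L g s t x| ≤ 1 :=
  abs_simplex (hs _ trivial) fun _ => abs_simplex (ht _ trivial) fun _ => hg _ _ _

lemma exists_pmf {n : ℕ} (p : Fin n → ℝ) (hp : p ∈ stdSimplex ℝ (Fin n)) :
    ∃ q : PMF (Fin n), ∀ i, (q i).toReal = p i := by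
  refine ⟨PMF.ofFintype (fun i => ENNReal.ofReal (p i)) ?_, fun i => ?_⟩
  · rw [← ENNReal.ofReal_sum_of_nonneg (fun i _ => hp.1 i), hp.2]; simp
  · rw [PMF.ofFintype_apply, ENNReal.toReal_ofReal (hp.1 i)]

/-- array of a garbling -/
noncomputable def arr (L : ℕ) (σ : Garbling) : ℕ → Fin (L + 1) → ℝ :=
  fun c i => ((σ c).map (cl L) i).toReal

lemma arr_mem (L : ℕ) (σ : Garbling) : arr L σ ∈ SS L := fun c _ =>
  ⟨fun _ => ENNReal.toReal_nonneg, by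
    have := pmf_tsum ((σ c).map (cl L)); rwa [tsum_fintype] at this⟩

lemma arr_surj {L : ℕ} {s : ℕ → Fin (L + 1) → ℝ} (hs : s ∈ SS L) : ∃ σ, arr L σ = s := by
  choose q hq using fun c => exists_pmf (s c) (hs c trivial)
  refine ⟨fun c => (q c).map (Fin.val : Fin (L + 1) → ℕ), ?_⟩
  funext c i
  unfold arr
  rw [PMF.map_comp]
  have : (cl L ∘ (Fin.val : Fin (L + 1) → ℕ)) = id := by
    funext i
    simp only [cl, Function.comp, id]
    ext
    simp
    omega
  rw [this, PMF.map_id, hq]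

lemma EE_clamp {L : ℕ} (p : PMF ℕ) {f : ℕ → ℝ} (hf : ∀ i, |f i| ≤ 1)
    (hc : ∀ i, f i = f (cl L i)) :
    EE p f = ∑ i : Fin (L + 1), (p.map (cl L) i).toReal * f i := by
  have := EE_map p (cl L) (f := fun i => f i) (fun i => hf _)
  have h2 : EE p f = EE p (fun a => f (cl L a)) := congrArg (EE p) (funext hc)
  rw [h2, ← this, EE, tsum_fintype]

lemma payoff_arr (u : InfoStruct K) {L : ℕ} {g : K → ℕ → ℕ → ℝ} (hg : IsPayoffL L g)
    (σ τ : Garbling) : payoff u g σ τ = EE u (hh L g (arr L σ) (arr L τ)) := by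
  have hb := IsPayoff.abs_le_one ⟨L, hg⟩
  rw [payoff_eq]
  congr 1
  funext x
  rw [EE_clamp (L := L)]
  · unfold hh
    refine Finset.sum_congr rfl fun i _ => ?_
    congr 1
    rw [EE_clamp (L := L) _ (fun j => hb _ _ _)]
    · rfl
    · intro j
      rw [payoff_clamp hg, payoff_clamp hg x.1 i (cl L j)]
      congr 2
      simp [cl]
  · exact fun i => abs_EE_le _ fun j => hb _ _ _
  · intro i
    congr 1
    funext j
    rw [payoff_clamp hg, payoff_clamp hg x.1 (cl L i) j]
    congr 2
    simp [cl]

lemma SS_convex (L : ℕ) : Convex ℝ (SS L) := convex_pi fun _ _ => convex_stdSimplex ℝ _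

lemma SS_compact (L : ℕ) : IsCompact (SS L) := isCompact_univ_pi fun _ => isCompact_stdSimplex ℝ _

lemma SS_nonempty (L : ℕ) : (SS L).Nonempty := ⟨_, arr_mem L (fun _ => PMF.pure 0)⟩

lemma hh_left {L : ℕ} (g : K → ℕ → ℕ → ℝ) (s s' t : ℕ → Fin (L + 1) → ℝ) (a b : ℝ)
    (x : K × ℕ × ℕ) : hh L g (a • s + b • s') t x = a * hh L g s t x + b * hh L g s' t x := by
  simp only [hh, Finset.mul_sum, ← Finset.sum_add_distrib, Pi.add_apply, Pi.smul_apply, smul_eq_mul]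
  refine Finset.sum_congr rfl fun i _ => Finset.sum_congr rfl fun j _ => ?_
  ring

lemma hh_right {L : ℕ} (g : K → ℕ → ℕ → ℝ) (s t t' : ℕ → Fin (L + 1) → ℝ) (a b : ℝ)
    (x : K × ℕ × ℕ) : hh L g s (a • t + b • t') x = a * hh L g s t x + b * hh L g s t' x := by
  simp only [hh, Finset.mul_sum, ← Finset.sum_add_distrib, Pi.add_apply, Pi.smul_apply, smul_eq_mul]
  refine Finset.sum_congr rfl fun i _ => Finset.sum_congr rfl fun j _ => ?_
  ring

lemma EE_lin {α : Type} (p : PMF α) {f f' : α → ℝ} (hf : ∀ a, |f a| ≤ 1) (hf' : ∀ a, |f' a| ≤ 1)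
    (a b : ℝ) : EE p (fun x => a * f x + b * f' x) = a * EE p f + b * EE p f' := by
  unfold EE
  rw [← tsum_mul_left, ← tsum_mul_left, ← Summable.tsum_add ((EE_summable p hf).mul_left a)
    ((EE_summable p hf').mul_left b)]
  congr 1; funext x; ring

lemma EE_cont {α T : Type} [TopologicalSpace T] (p : PMF α) {S : Set T} {f : T → α → ℝ}
    (hf : ∀ t ∈ S, ∀ a, |f t a| ≤ 1) (hc : ∀ a, Continuous fun t => f t a) :
    ContinuousOn (fun t => EE p (f t)) S := by
  unfold EE
  refine continuousOn_tsum (fun a => (continuous_const.mul (hc a)).continuousOn) (pmf_summable p) ?_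
  intro a t ht
  rw [norm_mul, Real.norm_of_nonneg ENNReal.toReal_nonneg]
  exact mul_le_of_le_one_right ENNReal.toReal_nonneg (hf t ht a)

lemma exists_opt (u : InfoStruct K) {g : K → ℕ → ℕ → ℝ} (hg : IsPayoff g) :
    ∃ τ : Garbling, ∀ σ : Garbling, payoff u g σ τ ≤ val u g := by
  have hb := hg.abs_le_one
  obtain ⟨L, hL⟩ := hg
  obtain ⟨t, ht, s, hs, hsad⟩ := Sion.exists_isSaddlePointOn (X := SS L) (Y := SS L)
    (f := fun t s => EE u (hh L g s t)) (SS_nonempty L) (SS_convex L) (SS_compact L)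
    (fun s hs => (EE_cont u (fun t ht => abs_hh hb hs ht)
      (fun x => by unfold hh; fun_prop)).lowerSemicontinuousOn)
    (fun s hs => ConvexOn.quasiconvexOn ⟨SS_convex L, fun t ht t' ht' a b _ _ _ => by
      beta_reduce
      rw [funext (hh_right g s t t' a b), EE_lin u (abs_hh hb hs ht) (abs_hh hb hs ht')]
      simp⟩)
    (SS_convex L) (SS_nonempty L) (SS_compact L)
    (fun t ht => (EE_cont u (fun s hs => abs_hh hb hs ht)
      (fun x => by unfold hh; fun_prop)).upperSemicontinuousOn)
    (fun t ht => ConcaveOn.quasiconcaveOn ⟨SS_convex L, fun s hs s' hs' a b _ _ _ => by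
      beta_reduce
      rw [funext (hh_left g s s' t a b), EE_lin u (abs_hh hb hs ht) (abs_hh hb hs' ht)]
      simp⟩)
  obtain ⟨τ, rfl⟩ := arr_surj ht
  obtain ⟨σ', rfl⟩ := arr_surj hs
  refine ⟨τ, fun σ => ?_⟩
  refine le_trans ?_ (le_ciSup (bddAbove_inf u hb) σ')
  refine le_ciInf fun τ' => ?_
  rw [payoff_arr u hL, payoff_arr u hL]
  exact hsad _ (arr_mem L τ') _ (arr_mem L σ)

/-! ### Conditional independence -/

lemma cond_bind (w : PMF (K × (ℕ × ℕ) × (ℕ × ℕ)))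
    (hci : ∀ (k : K) (p : ℕ × ℕ) (d : ℕ),
      (∑' y : (ℕ × ℕ) × (ℕ × ℕ), w (k, y)) * (∑' d₁ : ℕ, w (k, p, (d, d₁)))
        = (∑' q : ℕ × ℕ, w (k, p, q))
          * (∑' (p' : ℕ × ℕ) (d₁ : ℕ), w (k, p', (d, d₁)))) :
    ∃ q : K → PMF ℕ, w.map (fun x => (x.1, x.2.1, x.2.2.1))
      = w.bind (fun x => (q x.1).map (fun d => (x.1, x.2.1, d))) := by
  classical
  have htop : ∀ k, (∑' y : (ℕ × ℕ) × (ℕ × ℕ), w (k, y)) ≠ ⊤ := by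
    intro k
    refine ne_top_of_le_ne_top w.tsum_coe_ne_top ?_
    have h := ENNReal.tsum_prod' (f := fun x : K × (ℕ × ℕ) × (ℕ × ℕ) => w x)
    rw [h]
    exact ENNReal.le_tsum (f := fun k => ∑' y : (ℕ × ℕ) × (ℕ × ℕ), w (k, y)) k
  have hsum : ∀ k, (∑' d : ℕ, ∑' (p' : ℕ × ℕ) (d₁ : ℕ), w (k, p', (d, d₁)))
      = ∑' y : (ℕ × ℕ) × (ℕ × ℕ), w (k, y) := by
    intro k
    have h := ENNReal.tsum_prod' (f := fun y : (ℕ × ℕ) × (ℕ × ℕ) => w (k, y))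
    rw [ENNReal.tsum_comm, h]
    refine tsum_congr fun p => ?_
    rw [ENNReal.tsum_prod']
  have hq : ∀ k, ∃ q : PMF ℕ, (∑' y : (ℕ × ℕ) × (ℕ × ℕ), w (k, y)) ≠ 0 → ∀ d,
      q d = (∑' (p' : ℕ × ℕ) (d₁ : ℕ), w (k, p', (d, d₁)))
        * (∑' y : (ℕ × ℕ) × (ℕ × ℕ), w (k, y))⁻¹ := by
    intro k
    by_cases h0 : (∑' y : (ℕ × ℕ) × (ℕ × ℕ), w (k, y)) = 0
    · exact ⟨PMF.pure 0, fun h => absurd h0 h⟩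
    · refine ⟨PMF.normalize (fun d => ∑' (p' : ℕ × ℕ) (d₁ : ℕ), w (k, p', (d, d₁)))
        (by rw [hsum]; exact h0) (by rw [hsum]; exact htop k), fun _ d => ?_⟩
      rw [PMF.normalize_apply, hsum]
  choose q hq using hq
  refine ⟨q, ?_⟩
  ext ⟨k, p, d⟩
  have hL : (w.map (fun x => (x.1, x.2.1, x.2.2.1))) (k, p, d) = ∑' d₁ : ℕ, w (k, p, (d, d₁)) := by
    rw [PMF.map_apply, ENNReal.tsum_prod', tsum_eq_single k, ENNReal.tsum_prod', tsum_eq_single p,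
      ENNReal.tsum_prod', tsum_eq_single d]
    · simp
    · intro d' h; simp [h.symm]
    · intro d' h; simp [h.symm]
    · intro d' h; simp [h.symm]
  have hR : (w.bind (fun x => (q x.1).map (fun d => (x.1, x.2.1, d)))) (k, p, d)
      = (∑' r : ℕ × ℕ, w (k, p, r)) * q k d := by
    rw [PMF.bind_apply, ENNReal.tsum_prod', tsum_eq_single k, ENNReal.tsum_prod', tsum_eq_single p,
      ← ENNReal.tsum_mul_right]
    · refine tsum_congr fun r => ?_
      congr 1
      rw [PMF.map_apply, tsum_eq_single d]
      · simp
      · intro d' h; simp [h.symm]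
    · intro d' h; simp [PMF.map_apply, h.symm]
    · intro d' h; simp [PMF.map_apply, h.symm]
  rw [hL, hR]
  by_cases h0 : (∑' y : (ℕ × ℕ) × (ℕ × ℕ), w (k, y)) = 0
  · have hz := ENNReal.tsum_eq_zero.1 h0
    simp [hz]
  · rw [hq k h0, ← mul_assoc, ← hci k p d, mul_comm, ← mul_assoc,
      ENNReal.inv_mul_cancel h0 (htop k), one_mul]

/-- the induced single agent objective -/
noncomputable def gtil (q : K → PMF ℕ) (g : K → ℕ → ℕ → ℝ) (τ : Garbling) (k : K) (i : ℕ) : ℝ :=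
  EE (q k) (fun d => EE (τ d) (g k i))

lemma abs_gt (q : K → PMF ℕ) {g : K → ℕ → ℕ → ℝ} (hg : ∀ k i j, |g k i j| ≤ 1)
    (τ : Garbling) (k : K) (i : ℕ) : |gtil q g τ k i| ≤ 1 :=
  abs_EE_le _ fun _ => abs_EE_le _ fun _ => hg _ _ _

lemma payoff_cond (w : PMF (K × (ℕ × ℕ) × (ℕ × ℕ))) (q : K → PMF ℕ)
    (hq : w.map (fun x => (x.1, x.2.1, x.2.2.1))
      = w.bind (fun x => (q x.1).map (fun d => (x.1, x.2.1, d))))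
    {g : K → ℕ → ℕ → ℝ} (hg : ∀ k i j, |g k i j| ≤ 1) (φ : ℕ × ℕ → ℕ) (σ τ : Garbling) :
    payoff (w.map (fun x => (x.1, φ x.2.1, x.2.2.1))) g σ τ
      = EE w (fun x => EE (σ (φ x.2.1)) (gtil q g τ x.1)) := by
  have e : w.map (fun x => (x.1, φ x.2.1, x.2.2.1))
      = (w.map (fun x => (x.1, x.2.1, x.2.2.1))).map (fun y => (y.1, φ y.2.1, y.2.2)) := by
    rw [PMF.map_comp]; rfl
  rw [e, payoff_map _ _ hg, hq, EE_bind]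
  · congr 1
    funext x
    rw [EE_map]
    · simp only []
      exact EE_swap _ _ (fun d i => abs_EE_le _ fun j => hg _ _ _)
    · exact fun x => abs_EE_le _ fun i => abs_EE_le _ fun j => hg _ _ _
  · exact fun x => abs_EE_le _ fun i => abs_EE_le _ fun j => hg _ _ _

/-- The payoff function in `𝒢` associated with a single-agent objective. -/
noncomputable def GG (L : ℕ) (h : K → ℕ → ℝ) (k : K) (i j : ℕ) : ℝ :=
  if L ≤ i then -1 else if L ≤ j then 1 else h k i

lemma GG_isPayoff (L : ℕ) {h : K → ℕ → ℝ} (hh : ∀ k i, |h k i| ≤ 1) : IsPayoff (GG L h) := by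
  refine ⟨L, fun k i j => ?_, fun k i j hi => by simp [GG, hi], fun k i j hi hj => by
    simp [GG, hi, hj]⟩
  unfold GG
  split_ifs
  · simp
  · simp
  · exact abs_le.1 (hh k i)

lemma val_GG (w : PMF (K × (ℕ × ℕ) × (ℕ × ℕ))) (L : ℕ) {h : K → ℕ → ℝ} (hh : ∀ k i, |h k i| ≤ 1)
    (hL : ∀ k i, L ≤ i → h k i = -1) (φ ψ : ℕ × ℕ → ℕ) :
    val (w.map (fun x => (x.1, φ x.2.1, ψ x.2.2))) (GG L h)
      = ⨆ σ : Garbling, EE w (fun x => EE (σ (φ x.2.1)) (h x.1)) := by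
  have hb := (GG_isPayoff L hh).abs_le_one
  unfold val
  congr 1
  funext σ
  apply le_antisymm
  · refine (ciInf_le (bddBelow_payoff _ hb σ) (fun _ => PMF.pure 0)).trans (le_of_eq ?_)
    rw [payoff_map _ _ hb]
    congr 1; funext x; congr 1; funext i
    rw [EE_pure]
    unfold GG
    split_ifs with h1 h2
    · rw [hL _ _ h1]
    · omega
    · rfl
  · refine le_ciInf fun τ => ?_
    rw [payoff_map _ _ hb]
    refine EE_mono _ (fun x => abs_EE_le _ fun i => hh _ _)
      (fun x => abs_EE_le _ fun i => abs_EE_le _ fun j => hb _ _ _) fun x => ?_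
    refine EE_mono _ (fun i => hh _ _) (fun i => abs_EE_le _ fun j => hb _ _ _) fun i => ?_
    rw [← EE_const (τ (ψ x.2.2)) (h x.1 i)]
    refine EE_mono _ (fun _ => hh _ _) (fun j => hb _ _ _) fun j => ?_
    unfold GG
    split_ifs with h1 h2
    · rw [hL _ _ h1]
    · exact (abs_le.1 (hh _ _)).2
    · rfl

/-- Informational complements: if under `w ∈ Δ(K × (C×C₁) × (D×D₁))` player
1's joint signal `(c,c₁)` and player 2's signal `d` are conditionally
independent given the state `k`, then `d(u',v') ≤ d(u,v)`, where `u` keeps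
everything, `v = marg` dropping `c₁`, `u' = marg` dropping `d₁`, `v' = marg`
dropping both (product signal spaces are encoded in `ℕ` via `Nat.pair`). -/
theorem informational_complements (K : Type) [Fintype K]
    (hK : 2 ≤ Fintype.card K) (w : PMF (K × (ℕ × ℕ) × (ℕ × ℕ)))
    (hci : ∀ (k : K) (p : ℕ × ℕ) (d : ℕ),
      (∑' y : (ℕ × ℕ) × (ℕ × ℕ), w (k, y)) * (∑' d₁ : ℕ, w (k, p, (d, d₁)))
        = (∑' q : ℕ × ℕ, w (k, p, q))
          * (∑' (p' : ℕ × ℕ) (d₁ : ℕ), w (k, p', (d, d₁)))) :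
    dVal (w.map (fun x => (x.1, Nat.pair x.2.1.1 x.2.1.2, x.2.2.1)))
         (w.map (fun x => (x.1, x.2.1.1, x.2.2.1)))
      ≤ dVal (w.map (fun x => (x.1, Nat.pair x.2.1.1 x.2.1.2, Nat.pair x.2.2.1 x.2.2.2)))
             (w.map (fun x => (x.1, x.2.1.1, Nat.pair x.2.2.1 x.2.2.2))) := by
  classical
  obtain ⟨q, hq⟩ := cond_bind w hci
  refine Real.iSup_le ?_ (Real.iSup_nonneg fun _ => abs_nonneg _)
  rintro ⟨g, hg⟩
  have hb := hg.abs_le_one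
  obtain ⟨τ, hτ⟩ := exists_opt (w.map (fun x => (x.1, x.2.1.1, x.2.2.1))) hg
  obtain ⟨L, hL⟩ := hg
  have hgL : ∀ k i, L ≤ i → gtil q g τ k i = -1 := by
    intro k i hi
    have : g k i = fun _ => (-1 : ℝ) := funext fun j => hL.2.1 k i j hi
    simp only [gtil, this, EE_const]
  have hgb := abs_gt q hb τ
  -- monotonicity
  have hmono : val (w.map (fun x => (x.1, x.2.1.1, x.2.2.1))) g
      ≤ val (w.map (fun x => (x.1, Nat.pair x.2.1.1 x.2.1.2, x.2.2.1))) g := by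
    refine ciSup_le fun σ => ?_
    refine le_trans (le_of_eq ?_) (le_ciSup (bddAbove_inf _ hb) (fun n => σ n.unpair.1))
    congr 1
    funext τ'
    rw [payoff_map _ _ hb, payoff_map _ _ hb]
    simp
  have hbd : BddAbove (Set.range fun σ : Garbling =>
      EE w (fun x => EE (σ (Nat.pair x.2.1.1 x.2.1.2)) (gtil q g τ x.1))) :=
    ⟨1, by
      rintro _ ⟨σ, rfl⟩
      exact (abs_le.1 (abs_EE_le _ fun x => abs_EE_le _ fun i => hgb _ _)).2⟩
  have h1 := val_GG w L hgb hgL (fun p => Nat.pair p.1 p.2) (fun p => Nat.pair p.1 p.2)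
  have h2 := val_GG w L hgb hgL (fun p => p.1) (fun p => Nat.pair p.1 p.2)
  have h3 : val (w.map (fun x => (x.1, Nat.pair x.2.1.1 x.2.1.2, x.2.2.1))) g
      ≤ ⨆ σ : Garbling, EE w (fun x => EE (σ (Nat.pair x.2.1.1 x.2.1.2)) (gtil q g τ x.1)) := by
    refine ciSup_le fun σ => ?_
    refine (ciInf_le (bddBelow_payoff _ hb σ) τ).trans ?_
    rw [payoff_cond w q hq hb (fun p => Nat.pair p.1 p.2) σ τ]
    exact le_ciSup hbd σ
  have h4 : (⨆ σ : Garbling, EE w (fun x => EE (σ x.2.1.1) (gtil q g τ x.1)))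
      ≤ val (w.map (fun x => (x.1, x.2.1.1, x.2.2.1))) g := by
    refine ciSup_le fun σ => ?_
    rw [← payoff_cond w q hq hb (fun p => p.1) σ τ]
    exact hτ σ
  refine le_trans ?_ (le_ciSup (bddAbove_dVal _ _) ⟨GG L (gtil q g τ), GG_isPayoff L hgb⟩)
  simp only
  rw [abs_of_nonneg (sub_nonneg.2 hmono)]
  refine le_trans ?_ (le_abs_self _)
  rw [h1, h2]
  linarith

end ValueDistance
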